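/- (Proposition 3.7) Let I ⊆ H⁺ be a two-sided ideal of H with S(I) ⊆ I, let ℓ be a strong connection with connection 1-form ω, and set N^bal := ⟨π(ω(I))⟩_σ. Then σ(N^bal) ⊆ N^bal and can(N^bal) ⊆ A ⊗ I, i.e. N^bal is contained in the vertical subspace V_I := {y ∈ Q : can(y) ∈ A ⊗ I}. Consequently σ induces a well-defined endomorphism of Q/N^bal which preserves the subspace V_I/N^bal. -/

import Mathlib

/-!
The braiding is computed from the canonical map by the formula
`β(a ⊗ a') = a₍₀₎a' ⊗ a₍₁₎ = δ(a a'₍₀₎) (1 ⊗ S(a'₍₁₎))`, that is `β = Φ ∘ c̃` with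
`Φ(x ⊗ h) = δ(x) (1 ⊗ S(h))` (`antipodeTwist_ctilde`); it rests on
`a₍₀₎ ⊗ a₍₁₎ S(a₍₂₎) = a ⊗ 1` (`antipodeTwist_coaction`).
As `I` is a left ideal stable under `S`, the map `Φ` preserves `A ⊗ I` (`antipodeTwist_mem_AtI`),
so `σ` preserves `V_I`. The generators `π(ω(h))`, `h ∈ I`, lie in `V_I` because `c̃(ℓ(h)) = 1 ⊗ h`
and `ε(h) = 0`, hence so does their `σ`-closure.
-/

open TensorProduct

noncomputable section

variable {k H A : Type*} [Field k] [Ring H] [HopfAlgebra k H] [Ring A] [Algebra k A]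

/-- The lifted canonical map `c̃ : A ⊗ A → A ⊗ H`, `c̃(a ⊗ a') = a a'₍₀₎ ⊗ a'₍₁₎`,
for a coaction `δ : A → A ⊗ H`. -/
def ctilde (δ : A →ₐ[k] A ⊗[k] H) : A ⊗[k] A →ₗ[k] A ⊗[k] H :=
  (TensorProduct.map (LinearMap.mul' k A) LinearMap.id)
    ∘ₗ (TensorProduct.assoc k A A H).symm.toLinearMap
    ∘ₗ (TensorProduct.map LinearMap.id δ.toLinearMap)

/-- The map `β : A ⊗ A → A ⊗ H`, `β(a ⊗ a') = a₍₀₎a' ⊗ a₍₁₎`. -/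
def betaMap (δ : A →ₐ[k] A ⊗[k] H) : A ⊗[k] A →ₗ[k] A ⊗[k] H :=
  (TensorProduct.map (LinearMap.mul' k A) LinearMap.id)
    ∘ₗ (TensorProduct.assoc k A A H).symm.toLinearMap
    ∘ₗ (TensorProduct.map LinearMap.id (TensorProduct.comm k H A).toLinearMap)
    ∘ₗ (TensorProduct.assoc k A H A).toLinearMap
    ∘ₗ (TensorProduct.map δ.toLinearMap LinearMap.id)

/-- The diagonal coaction `δ₂ : A ⊗ A → (A ⊗ A) ⊗ H`,
`δ₂(a ⊗ a') = (a₍₀₎ ⊗ a'₍₀₎) ⊗ a₍₁₎a'₍₁₎`. -/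
def delta2 (δ : A →ₐ[k] A ⊗[k] H) : A ⊗[k] A →ₗ[k] (A ⊗[k] A) ⊗[k] H :=
  (TensorProduct.map LinearMap.id (LinearMap.mul' k H))
    ∘ₗ (TensorProduct.tensorTensorTensorComm k A H A H).toLinearMap
    ∘ₗ (TensorProduct.map δ.toLinearMap δ.toLinearMap)

/-- `J ⊆ A ⊗ A`: the k-span of the balanced relations `ab ⊗ a' − a ⊗ ba'`
with `b` a coinvariant element (`δ b = b ⊗ 1`). -/
def Jrel (δ : A →ₐ[k] A ⊗[k] H) : Submodule k (A ⊗[k] A) :=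
  Submodule.span k {x | ∃ a a' b : A, δ b = b ⊗ₜ[k] (1 : H) ∧
    x = (a * b) ⊗ₜ[k] a' - a ⊗ₜ[k] (b * a')}

/-- `A ⊗ I`: the k-span of `{a ⊗ x : a ∈ A, x ∈ I}` inside `A ⊗ H`. -/
def AtI (A : Type*) [Ring A] [Algebra k A] (I : Submodule k H) :
    Submodule k (A ⊗[k] H) :=
  Submodule.span k {z | ∃ a : A, ∃ h ∈ I, z = a ⊗ₜ[k] h}

/-- Counitality of the coaction `δ` : `(id ⊗ ε) ∘ δ = id` under `A ⊗ k ≅ A`. -/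
def Counital (δ : A →ₐ[k] A ⊗[k] H) : Prop :=
  ∀ a : A, (TensorProduct.rid k A)
    (TensorProduct.map LinearMap.id (Coalgebra.counit (R := k) (A := H)) (δ a)) = a

/-- Coassociativity of the coaction `δ` : `(δ ⊗ id) ∘ δ = (id ⊗ Δ) ∘ δ`
up to the tensor associator. -/
def Coassoc (δ : A →ₐ[k] A ⊗[k] H) : Prop :=
  ∀ a : A, (TensorProduct.assoc k A H H)
      (TensorProduct.map δ.toLinearMap LinearMap.id (δ a))
    = TensorProduct.map LinearMap.id (Coalgebra.comul (R := k) (A := H)) (δ a)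

/-- The `σ`-closure `⟨W⟩_σ = Σ_{n ≥ 0} σⁿ(W)` of a subspace `W`. -/
def sclosure {M : Type*} [AddCommGroup M] [Module k M]
    (σ : M →ₗ[k] M) (W : Submodule k M) : Submodule k M :=
  ⨆ n : ℕ, Submodule.map (σ ^ n) W

/-- The map `Φ : A ⊗ H → A ⊗ H`, `Φ(x ⊗ h) = δ(x) (1 ⊗ S(h))`. -/
def antipodeTwist (δ : A →ₐ[k] A ⊗[k] H) : A ⊗[k] H →ₗ[k] A ⊗[k] H :=
  LinearMap.mul' k (A ⊗[k] H) ∘ₗ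
    TensorProduct.map δ.toLinearMap
      ((Algebra.TensorProduct.includeRight : H →ₐ[k] A ⊗[k] H).toLinearMap ∘ₗ
        HopfAlgebra.antipode k)

lemma antipodeTwist_tmul (δ : A →ₐ[k] A ⊗[k] H) (x : A) (h : H) :
    antipodeTwist δ (x ⊗ₜ[k] h) = δ x * (1 : A) ⊗ₜ[k] HopfAlgebra.antipode k h := by
  simp [antipodeTwist]

/-- `a₍₀₎ ⊗ a₍₁₎ S(a₍₂₎) = a ⊗ 1`: coassociativity, the antipode axiom and counitality. -/
lemma antipodeTwist_coaction (δ : A →ₐ[k] A ⊗[k] H) (hcu : Counital δ) (hca : Coassoc δ) (a : A) :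
    antipodeTwist δ (δ a) = a ⊗ₜ[k] (1 : H) := by
  let T : H ⊗[k] H →ₗ[k] H :=
    LinearMap.mul' k H ∘ₗ TensorProduct.map LinearMap.id (HopfAlgebra.antipode k)
  have h1 : ∀ t : A ⊗[k] H, antipodeTwist δ t =
      TensorProduct.map LinearMap.id T
        (TensorProduct.assoc k A H H (TensorProduct.map δ.toLinearMap LinearMap.id t)) := by
    intro t
    induction t with
    | zero => simp
    | add x y hx hy => simp only [map_add, hx, hy]
    | tmul x h =>
      rw [antipodeTwist_tmul]
      simp only [TensorProduct.map_tmul, AlgHom.toLinearMap_apply, LinearMap.id_apply]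
      induction δ x with
      | zero => simp
      | add x y hx hy => simp only [map_add, add_mul, TensorProduct.add_tmul, hx, hy]
      | tmul u g => simp [T]
  have h2 : ∀ t : A ⊗[k] H,
      TensorProduct.map LinearMap.id T
        (TensorProduct.map LinearMap.id (Coalgebra.comul (R := k) (A := H)) t) =
      (TensorProduct.rid k A
        (TensorProduct.map LinearMap.id (Coalgebra.counit (R := k) (A := H)) t)) ⊗ₜ[k] (1 : H) := by
    intro t
    induction t with
    | zero => simp
    | add x y hx hy => simp only [map_add, TensorProduct.add_tmul, hx, hy]
    | tmul x h =>
      have hT : T (Coalgebra.comul (R := k) h) = algebraMap k H (Coalgebra.counit (R := k) h) :=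
        HopfAlgebra.mul_antipode_lTensor_comul_apply h
      simp only [TensorProduct.map_tmul, LinearMap.id_apply, TensorProduct.rid_tmul, hT]
      rw [Algebra.algebraMap_eq_smul_one, TensorProduct.tmul_smul, TensorProduct.smul_tmul']
  rw [h1, hca, h2, hcu]

lemma ctilde_tmul (δ : A →ₐ[k] A ⊗[k] H) (a a' : A) :
    ctilde δ (a ⊗ₜ[k] a') = a ⊗ₜ[k] (1 : H) * δ a' := by
  simp only [ctilde, LinearMap.comp_apply, TensorProduct.map_tmul, AlgHom.toLinearMap_apply,
    LinearMap.id_apply, LinearEquiv.coe_coe]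
  induction δ a' with
  | zero => simp
  | add x y hx hy => simp only [map_add, mul_add, TensorProduct.tmul_add, hx, hy]
  | tmul u g => simp

lemma betaMap_tmul (δ : A →ₐ[k] A ⊗[k] H) (a a' : A) :
    betaMap δ (a ⊗ₜ[k] a') = δ a * a' ⊗ₜ[k] (1 : H) := by
  simp only [betaMap, LinearMap.comp_apply, TensorProduct.map_tmul, AlgHom.toLinearMap_apply,
    LinearMap.id_apply, LinearEquiv.coe_coe]
  induction δ a with
  | zero => simp
  | add x y hx hy => simp only [map_add, add_mul, TensorProduct.add_tmul, hx, hy]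
  | tmul u g => simp

/-- `Φ` turns left multiplication by `a ⊗ 1` into left multiplication by `δ(a)`. -/
lemma antipodeTwist_mul (δ : A →ₐ[k] A ⊗[k] H) (a : A) (t : A ⊗[k] H) :
    antipodeTwist δ (a ⊗ₜ[k] (1 : H) * t) = δ a * antipodeTwist δ t := by
  induction t with
  | zero => simp
  | add x y hx hy => simp only [map_add, mul_add, hx, hy]
  | tmul u g =>
    simp only [Algebra.TensorProduct.tmul_mul_tmul, one_mul, antipodeTwist_tmul, map_mul, mul_assoc]

/-- `β = Φ ∘ c̃`. -/
lemma antipodeTwist_ctilde (δ : A →ₐ[k] A ⊗[k] H) (hcu : Counital δ) (hca : Coassoc δ)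
    (x : A ⊗[k] A) : antipodeTwist δ (ctilde δ x) = betaMap δ x := by
  induction x with
  | zero => simp
  | add x y hx hy => simp only [map_add, hx, hy]
  | tmul a a' =>
    rw [ctilde_tmul, antipodeTwist_mul, antipodeTwist_coaction δ hcu hca, betaMap_tmul]

lemma antipodeTwist_mem_AtI (δ : A →ₐ[k] A ⊗[k] H) (I : Submodule k H)
    (hIl : ∀ h : H, ∀ x ∈ I, h * x ∈ I)
    (hIS : ∀ x ∈ I, HopfAlgebra.antipode (R := k) x ∈ I)
    {z : A ⊗[k] H} (hz : z ∈ AtI A I) : antipodeTwist δ z ∈ AtI A I := by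
  suffices AtI A I ≤ (AtI A I).comap (antipodeTwist δ) from this hz
  refine Submodule.span_le.2 ?_
  rintro _ ⟨a, h, hh, rfl⟩
  simp only [Submodule.comap_coe, Set.mem_preimage, SetLike.mem_coe, antipodeTwist_tmul]
  induction δ a with
  | zero => simp
  | add x y hx hy => rw [add_mul]; exact add_mem hx hy
  | tmul u g =>
    rw [Algebra.TensorProduct.tmul_mul_tmul]
    exact Submodule.subset_span ⟨u * 1, _, hIl g _ (hIS h hh), rfl⟩

/-- Proposition 3.7: `σ(N^bal) ⊆ N^bal`, `N^bal ⊆ V_I`, and `σ`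
induces an endomorphism of `Q/N^bal` preserving `V_I/N^bal`. -/
theorem stmt12 (δ : A →ₐ[k] A ⊗[k] H) (hcu : Counital δ) (hca : Coassoc δ)
    (can : ((A ⊗[k] A) ⧸ Jrel δ) →ₗ[k] A ⊗[k] H)
    (hcan : ∀ x : A ⊗[k] A, can ((Jrel δ).mkQ x) = ctilde δ x)
    (hbij : Function.Bijective can)
    (βbar : ((A ⊗[k] A) ⧸ Jrel δ) →ₗ[k] A ⊗[k] H)
    (hβ : ∀ x : A ⊗[k] A, βbar ((Jrel δ).mkQ x) = betaMap δ x)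
    (σ : ((A ⊗[k] A) ⧸ Jrel δ) →ₗ[k] (A ⊗[k] A) ⧸ Jrel δ)
    (hσ : ∀ y : (A ⊗[k] A) ⧸ Jrel δ, can (σ y) = βbar y)
    (ℓ : H →ₗ[k] A ⊗[k] A)
    (hℓ1 : ℓ 1 = (1 : A) ⊗ₜ[k] (1 : A))
    (hℓ2 : ∀ h : H,
      TensorProduct.map LinearMap.id δ.toLinearMap (ℓ h)
        = (TensorProduct.assoc k A A H)
            (TensorProduct.map ℓ LinearMap.id (Coalgebra.comul (R := k) h)))
    (hℓ3 : ∀ h : H, ctilde δ (ℓ h) = (1 : A) ⊗ₜ[k] h)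
    (I : Submodule k H)
    (hI : I ≤ LinearMap.ker (Coalgebra.counit (R := k) (A := H)))
    (hIl : ∀ h : H, ∀ x ∈ I, h * x ∈ I)
    (hIr : ∀ h : H, ∀ x ∈ I, x * h ∈ I)
    (hIS : ∀ x ∈ I, HopfAlgebra.antipode (R := k) x ∈ I) :
    ∀ Nbal : Submodule k ((A ⊗[k] A) ⧸ Jrel δ),
      Nbal = sclosure σ
        (Submodule.map (Jrel δ).mkQ
          (Submodule.span k
            ((fun h : H => ℓ h - Coalgebra.counit (R := k) h • ((1 : A) ⊗ₜ[k] (1 : A)))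
              '' (I : Set H)))) →
      (∀ y ∈ Nbal, σ y ∈ Nbal) ∧
      Nbal ≤ Submodule.comap can (AtI A I) ∧
      ∃ σbar : (((A ⊗[k] A) ⧸ Jrel δ) ⧸ Nbal) →ₗ[k] ((A ⊗[k] A) ⧸ Jrel δ) ⧸ Nbal,
        (∀ y : (A ⊗[k] A) ⧸ Jrel δ, σbar (Nbal.mkQ y) = Nbal.mkQ (σ y)) ∧
        ∀ z ∈ Submodule.map Nbal.mkQ (Submodule.comap can (AtI A I)),
          σbar z ∈ Submodule.map Nbal.mkQ (Submodule.comap can (AtI A I)) := by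
  rintro Nbal rfl
  -- `σ` preserves the vertical subspace
  have hV : ∀ y : (A ⊗[k] A) ⧸ Jrel δ, can y ∈ AtI A I → can (σ y) ∈ AtI A I := by
    intro y hy
    obtain ⟨x, rfl⟩ := (Jrel δ).mkQ_surjective y
    rw [hcan] at hy
    rw [hσ, hβ, ← antipodeTwist_ctilde δ hcu hca]
    exact antipodeTwist_mem_AtI δ I hIl hIS hy
  have hN : ∀ W : Submodule k ((A ⊗[k] A) ⧸ Jrel δ), ∀ y ∈ sclosure σ W, σ y ∈ sclosure σ W := by
    intro W y hy
    suffices sclosure σ W ≤ (sclosure σ W).comap σ from this hy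
    refine iSup_le fun n => ?_
    rintro _ ⟨w, hw, rfl⟩
    refine Submodule.mem_iSup_of_mem (n + 1) ⟨w, hw, ?_⟩
    rw [pow_succ', Module.End.mul_apply]
  refine ⟨hN _, ?_, ?_⟩
  · refine iSup_le fun n => ?_
    rintro _ ⟨w, hw, rfl⟩
    rw [Submodule.mem_comap]
    induction n with
    | succ n ih =>
      rw [pow_succ', Module.End.mul_apply]
      exact hV _ ih
    | zero =>
      rw [pow_zero, Module.End.one_apply]
      obtain ⟨x, hx, rfl⟩ := hw
      rw [hcan, ← Submodule.mem_comap]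
      revert x
      refine Submodule.span_le.2 ?_
      rintro _ ⟨h, hh, rfl⟩
      have hε : Coalgebra.counit (R := k) h = 0 := hI hh
      simp only [hε, zero_smul, sub_zero, Submodule.comap_coe, Set.mem_preimage, SetLike.mem_coe,
        hℓ3]
      exact Submodule.subset_span ⟨1, h, hh, rfl⟩
  · refine ⟨Submodule.mapQ _ _ σ (hN _), fun y => rfl, ?_⟩
    rintro _ ⟨y, hy, rfl⟩
    exact ⟨σ y, hV y hy, rfl⟩

end
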